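/- Let X and Y be real random variables whose joint law has a density f_XY on ℝ², with strictly positive marginal densities f_X, f_Y and marginal CDFs F_X, F_Y, and define the copula density c(u,v) = f_XY(F_X^{-1}(u), F_Y^{-1}(v)) / ( f_X(F_X^{-1}(u)) · f_Y(F_Y^{-1}(v)) ) on (0,1)². If the mutual information MI(X,Y) = E[ log( f_XY(X,Y) / (f_X(X) f_Y(Y)) ) ] exists (the integrand is integrable with respect to the joint law), then MI(X,Y) = ∫_{(0,1)²} c(u,v) log c(u,v) du dv, i.e., the mutual information equals the negative differential entropy of the copula density. -/

import Mathlib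

open MeasureTheory Set

noncomputable section

/-- Probability integral transform: the law of `F(X)` is uniform on `(0,1)`. -/
theorem map_cdf_eq (μ : Measure ℝ) [IsProbabilityMeasure μ] (F G : ℝ → ℝ)
    (hF : ∀ x, F x = (μ (Iic x)).toReal) (hl : ∀ x, G (F x) = x)
    (hr : ∀ u ∈ Ioo (0 : ℝ) 1, F (G u) = u) :
    StrictMono F ∧ μ.map F = volume.restrict (Ioo (0 : ℝ) 1) := by
  have hmono : Monotone F := by
    intro a b hab
    rw [hF, hF]
    exact ENNReal.toReal_mono (measure_ne_top _ _) (measure_mono (Iic_subset_Iic.2 hab))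
  have hsm : StrictMono F := hmono.strictMono_of_injective (Function.LeftInverse.injective hl)
  refine ⟨hsm, ?_⟩
  have h0 : ∀ x, 0 < F x := fun x =>
    lt_of_le_of_lt (by rw [hF]; exact ENNReal.toReal_nonneg) (hsm (sub_one_lt x))
  have h1 : ∀ x, F x < 1 := fun x =>
    lt_of_lt_of_le (hsm (lt_add_one x)) (by rw [hF]; exact measureReal_le_one)
  have : IsFiniteMeasure (volume.restrict (Ioo (0 : ℝ) 1)) :=
    ⟨by simp⟩
  have : IsFiniteMeasure (μ.map F) := inferInstance
  refine Measure.ext_of_Iic _ _ fun a => ?_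
  rw [Measure.map_apply hmono.measurable measurableSet_Iic, Measure.restrict_apply measurableSet_Iic]
  rcases le_or_gt a 0 with ha | ha
  · have e1 : F ⁻¹' Iic a = ∅ := by
      ext x; simpa using lt_of_le_of_lt ha (h0 x)
    have e2 : Iic a ∩ Ioo (0 : ℝ) 1 = ∅ := by
      ext x
      simp only [mem_inter_iff, mem_Iic, mem_Ioo, mem_empty_iff_false, iff_false]
      intro h; linarith [h.1, h.2.1]
    rw [e1, e2]; simp
  rcases le_or_gt 1 a with hb | hb
  · have e1 : F ⁻¹' Iic a = univ := by
      ext x; simpa using (h1 x).le.trans hb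
    have e2 : Iic a ∩ Ioo (0 : ℝ) 1 = Ioo 0 1 := by
      apply inter_eq_right.2
      intro x hx; exact hx.2.le.trans hb
    rw [e1, e2]; simp
  · have e1 : F ⁻¹' Iic a = Iic (G a) := by
      ext x
      rw [mem_preimage, mem_Iic, mem_Iic]
      conv_lhs => rw [← hr a ⟨ha, hb⟩]
      exact hsm.le_iff_le
    have e2 : Iic a ∩ Ioo (0 : ℝ) 1 = Ioc 0 a := by
      ext x
      simp only [mem_inter_iff, mem_Iic, mem_Ioo, mem_Ioc]
      constructor
      · intro h; exact ⟨h.2.1, h.1⟩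
      · intro h; exact ⟨h.2, h.1, by linarith [h.2]⟩
    rw [e1, e2, Real.volume_Ioc, sub_zero]
    have := hr a ⟨ha, hb⟩
    rw [hF] at this
    rw [← this, ENNReal.ofReal_toReal (measure_ne_top _ _), this]

/-- Mutual information equals the negative differential entropy of the copula density:
`MI(X,Y) = E[log(f_XY(X,Y)/(f_X(X) f_Y(Y)))] = ∫_{(0,1)²} c(u,v) log c(u,v) du dv`, where
`c(u,v) = f_XY(F_X⁻¹(u), F_Y⁻¹(v)) / (f_X(F_X⁻¹(u)) f_Y(F_Y⁻¹(v)))`. -/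
theorem mi_eq_neg_copula_entropy {Ω : Type*} [MeasurableSpace Ω]
    (P : Measure Ω) [IsProbabilityMeasure P]
    (X Y : Ω → ℝ) (hX : Measurable X) (hY : Measurable Y)
    (fXY : ℝ × ℝ → ℝ) (hfXY_meas : Measurable fXY) (hfXY_nonneg : ∀ p, 0 ≤ fXY p)
    (hjoint : Measure.map (fun ω => (X ω, Y ω)) P
      = volume.withDensity (fun p => ENNReal.ofReal (fXY p)))
    (fX fY : ℝ → ℝ) (hfX_meas : Measurable fX) (hfY_meas : Measurable fY)
    (hfX_pos : ∀ x, 0 < fX x) (hfY_pos : ∀ y, 0 < fY y)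
    (hmargX : Measure.map X P = volume.withDensity (fun x => ENNReal.ofReal (fX x)))
    (hmargY : Measure.map Y P = volume.withDensity (fun y => ENNReal.ofReal (fY y)))
    (FX FY : ℝ → ℝ)
    (hFX : ∀ x, FX x = (P {ω | X ω ≤ x}).toReal)
    (hFY : ∀ y, FY y = (P {ω | Y ω ≤ y}).toReal)
    (FXinv FYinv : ℝ → ℝ)
    (hFXinv_left : ∀ x, FXinv (FX x) = x)
    (hFYinv_left : ∀ y, FYinv (FY y) = y)
    (hFXinv_right : ∀ u ∈ Ioo (0 : ℝ) 1, FX (FXinv u) = u)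
    (hFYinv_right : ∀ v ∈ Ioo (0 : ℝ) 1, FY (FYinv v) = v)
    (hMI_int : Integrable
      (fun ω => Real.log (fXY (X ω, Y ω) / (fX (X ω) * fY (Y ω)))) P) :
    ∫ ω, Real.log (fXY (X ω, Y ω) / (fX (X ω) * fY (Y ω))) ∂P
      = ∫ q in Ioo (0 : ℝ) 1 ×ˢ Ioo (0 : ℝ) 1,
          (fXY (FXinv q.1, FYinv q.2) / (fX (FXinv q.1) * fY (FYinv q.2)))
            * Real.log (fXY (FXinv q.1, FYinv q.2) / (fX (FXinv q.1) * fY (FYinv q.2))) := by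
  have hPX : IsProbabilityMeasure (P.map X) := Measure.isProbabilityMeasure_map hX.aemeasurable
  have hPY : IsProbabilityMeasure (P.map Y) := Measure.isProbabilityMeasure_map hY.aemeasurable
  obtain ⟨sX, mX⟩ := map_cdf_eq (P.map X) FX FXinv
    (fun x => by rw [hFX, Measure.map_apply hX measurableSet_Iic]; rfl) hFXinv_left hFXinv_right
  obtain ⟨sY, mY⟩ := map_cdf_eq (P.map Y) FY FYinv
    (fun x => by rw [hFY, Measure.map_apply hY measurableSet_Iic]; rfl) hFYinv_left hFYinv_right
  have measX : Measurable FX := sX.monotone.measurable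
  have measY : Measurable FY := sY.monotone.measurable
  have emb : MeasurableEmbedding (Prod.map FX FY) :=
    (measX.prodMap measY).measurableEmbedding (sX.injective.prodMap sY.injective)
  have hc : Measurable (fun p : ℝ × ℝ => fXY p / (fX p.1 * fY p.2)) := by fun_prop
  have hL : ∫ ω, Real.log (fXY (X ω, Y ω) / (fX (X ω) * fY (Y ω))) ∂P
      = ∫ p : ℝ × ℝ, fXY p * Real.log (fXY p / (fX p.1 * fY p.2)) := by
    have h := integral_map (μ := P) (φ := fun ω => (X ω, Y ω)) (hX.prodMk hY).aemeasurable
      (f := fun p : ℝ × ℝ => Real.log (fXY p / (fX p.1 * fY p.2)))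
      (Real.measurable_log.comp hc).aestronglyMeasurable
    rw [← h, hjoint, integral_withDensity_eq_integral_toReal_smul
      hfXY_meas.ennreal_ofReal (by simp)]
    refine integral_congr_ae (Filter.Eventually.of_forall fun p => ?_)
    simp only [smul_eq_mul, ENNReal.toReal_ofReal (hfXY_nonneg p)]
  have hprod : (volume.restrict (Ioo (0 : ℝ) 1)).prod (volume.restrict (Ioo (0 : ℝ) 1))
      = ((P.map X).map FX).prod ((P.map Y).map FY) := by rw [mX, mY]
  rw [hL, Measure.volume_eq_prod, ← Measure.prod_restrict, hprod,
    Measure.map_prod_map _ _ measX measY, emb.integral_map, hmargX, hmargY,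
    prod_withDensity hfX_meas.ennreal_ofReal hfY_meas.ennreal_ofReal,
    integral_withDensity_eq_integral_toReal_smul (by fun_prop)
      (Filter.Eventually.of_forall fun p => ENNReal.mul_lt_top (by simp) (by simp))]
  refine integral_congr_ae (Filter.Eventually.of_forall fun p => ?_)
  have a := hfX_pos p.1
  have b := hfY_pos p.2
  simp only [smul_eq_mul, ENNReal.toReal_mul, ENNReal.toReal_ofReal a.le,
    ENNReal.toReal_ofReal b.le, Prod.map_fst, Prod.map_snd, hFXinv_left, hFYinv_left, Prod.mk.eta]
  rw [← mul_assoc, mul_div_cancel₀ _ (mul_pos a b).ne']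

end
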